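/- arXiv:1401.3026 — 2 statements merged into one kernel-verified Lean document; each statement's English description precedes it below -/
import Mathlib

section
/- Let n ≥ 1 and let μ be a Borel probability measure on the space of real n×n matrices with bounded support, such that (A2) the support of μ leaves some proper cone K ⊆ ℝⁿ invariant, and (A3) the singular part of μ with respect to Lebesgue measure on ℝ^{n×n} is either zero or a finite linear combination of Dirac measures. Then the joint spectral radius of the support of μ equals the limit as p → ∞ (over positive integers p) of the p-radius of μ: ρ̂(supp μ) = lim_{p→∞} ρ_{p,μ}. -/
open MeasureTheory Filter Topology
open scoped ENNReal RealInnerProductSpace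

noncomputable section

/-- The space of real `n × n` matrices. -/
abbrev Mat (n : ℕ) := Matrix (Fin n) (Fin n) ℝ

/-- Euclidean space `ℝⁿ`. -/
abbrev EucSp (n : ℕ) := EuclideanSpace ℝ (Fin n)

/-- The (Borel = product) measurable structure on `n × n` real matrices. -/
instance matMeasurableSpace (n : ℕ) : MeasurableSpace (Mat n) :=
  inferInstanceAs (MeasurableSpace (Fin n → Fin n → ℝ))

/-- Lebesgue measure on the space of `n × n` real matrices `≅ ℝ^{n²}`. -/
def matLebesgue (n : ℕ) : Measure (Mat n) :=
  (inferInstance : MeasureSpace (Fin n → Fin n → ℝ)).volume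

/-- The operator norm (maximal singular value) of a real square matrix, induced by the
Euclidean norm. -/
def opNorm {m : ℕ} (A : Matrix (Fin m) (Fin m) ℝ) : ℝ :=
  ‖LinearMap.toContinuousLinearMap (Matrix.toEuclideanLin A)‖

/-- The product `A_k ⋯ A_1` of the matrices `f 0 = A_1, …, f (k-1) = A_k` (decreasing order of
indices). -/
def prodRev {m k : ℕ} (f : Fin k → Matrix (Fin m) (Fin m) ℝ) : Matrix (Fin m) (Fin m) ℝ :=
  ((List.ofFn f).reverse).prod

/-- The joint spectral radius of a set of matrices:
`ρ̂(M) = limsup_{k→∞} sup_{A₁,…,A_k ∈ M} ‖A_k ⋯ A₁‖^(1/k)`. -/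
def jsr {m : ℕ} (M : Set (Matrix (Fin m) (Fin m) ℝ)) : ℝ :=
  limsup (fun k : ℕ =>
    sSup {x : ℝ | ∃ f : Fin k → Matrix (Fin m) (Fin m) ℝ,
      (∀ i, f i ∈ M) ∧ x = opNorm (prodRev f)} ^ ((1 : ℝ) / k)) atTop

/-- `E[‖A_k ⋯ A₁‖^p]` where `A₁, …, A_k` are i.i.d. with law `μ`. -/
def kExpNorm {m : ℕ} (μ : Measure (Mat m)) (p k : ℕ) : ℝ :=
  ∫ f : Fin k → Mat m, opNorm (prodRev f) ^ p ∂(Measure.pi fun _ => μ)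

/-- The `L^p`-norm joint spectral radius (`p`-radius) of a probability distribution `μ`:
`ρ_{p,μ} = lim_{k→∞} (E[‖A_k ⋯ A₁‖^p])^{1/(pk)}`; since this limit exists for distributions
with bounded support, it coincides with the `limsup` used here. -/
def pRadius {m : ℕ} (μ : Measure (Mat m)) (p : ℕ) : ℝ :=
  limsup (fun k : ℕ => kExpNorm μ p k ^ (1 / (p * k : ℝ))) atTop

/-- The (topological) support of a measure on matrices. -/
def msupport {m : ℕ} (μ : Measure (Mat m)) : Set (Mat m) :=
  {A | ∀ ε : ℝ, 0 < ε → μ {B | opNorm (B - A) < ε} ≠ 0}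

/-- `μ` has bounded support. -/
def HasBoundedSupport {m : ℕ} (μ : Measure (Mat m)) : Prop :=
  ∃ C : ℝ, ∀ A ∈ msupport μ, opNorm A ≤ C

/-- A proper cone of `ℝⁿ`: a closed convex pointed cone with nonempty interior. -/
structure IsProperCone {m : ℕ} (K : Set (EucSp m)) : Prop where
  isClosed : IsClosed K
  convex : Convex ℝ K
  smul_mem : ∀ c : ℝ, 0 ≤ c → ∀ x ∈ K, c • x ∈ K
  pointed : ∀ x ∈ K, -x ∈ K → x = 0
  solid : (interior K).Nonempty

/-- A matrix `A` leaves a cone `K` invariant: `A K ⊆ K`. -/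
def LeavesInv {m : ℕ} (A : Matrix (Fin m) (Fin m) ℝ) (K : Set (EucSp m)) : Prop :=
  ∀ x ∈ K, Matrix.toEuclideanLin A x ∈ K

/-- A set of matrices leaves a cone invariant if each of its members does. -/
def SetLeavesInv {m : ℕ} (S : Set (Matrix (Fin m) (Fin m) ℝ)) (K : Set (EucSp m)) : Prop :=
  ∀ A ∈ S, LeavesInv A K

/-- `π(K)`: the set of matrices leaving the cone `K` invariant. -/
def piCone {m : ℕ} (K : Set (EucSp m)) : Set (Mat m) := {A | LeavesInv A K}

/-- Distance (valued in `ℝ≥0∞`, with `d(A, ∅) = ∞`) from a matrix to a set of matrices, in the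
operator norm. -/
def edistSet {m : ℕ} (A : Mat m) (S : Set (Mat m)) : ℝ≥0∞ :=
  ⨅ B ∈ S, ENNReal.ofReal (opNorm (A - B))

/-- Hausdorff distance between two sets of matrices (operator norm, valued in `ℝ≥0∞`). -/
def hausdorffDistE {m : ℕ} (S T : Set (Mat m)) : ℝ≥0∞ :=
  max (⨆ A ∈ S, edistSet A T) (⨆ B ∈ T, edistSet B S)

/-- `S_M = {A : A − M leaves K invariant}`, i.e. `{A : A ≥^K M}`. -/
def matSSet {m : ℕ} (K : Set (EucSp m)) (M : Mat m) : Set (Mat m) :=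
  {A | LeavesInv (A - M) K}

/-- `π_r = {M ∈ π(K) : d(M, ∂π(K)) ≥ r}`. -/
def piConeR {m : ℕ} (K : Set (EucSp m)) (r : ℝ) : Set (Mat m) :=
  {M | M ∈ piCone K ∧ ENNReal.ofReal r ≤ edistSet M (frontier (piCone K))}

/-- `M_r = (π_r ∩ supp μ_c) ∪ supp μ_s`. -/
def MrSet {m : ℕ} (K : Set (EucSp m)) (μc μs : Measure (Mat m)) (r : ℝ) : Set (Mat m) :=
  (piConeR K r ∩ msupport μc) ∪ msupport μs

/-- The measure `ν` is zero or a finite linear combination (with positive coefficients) of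
Dirac measures. -/
def IsFiniteDiracComb {m : ℕ} (ν : Measure (Mat m)) : Prop :=
  ν = 0 ∨ ∃ (N : ℕ) (w : Fin N → ℝ) (Ms : Fin N → Mat m),
    (∀ i, 0 < w i) ∧ ν = ∑ i, ENNReal.ofReal (w i) • Measure.dirac (Ms i)

/-- The `p`-th Kronecker power of a square matrix (with `A^{⊗0} = 1`, `A^{⊗(p+1)} = A^{⊗p} ⊗ A`). -/
def kronPow {m : ℕ} (A : Matrix (Fin m) (Fin m) ℝ) :
    (p : ℕ) → Matrix (Fin (m ^ p)) (Fin (m ^ p)) ℝ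
  | 0 => 1
  | p + 1 =>
    Matrix.reindex (finProdFinEquiv.trans (finCongr (pow_succ m p).symm))
      (finProdFinEquiv.trans (finCongr (pow_succ m p).symm))
      (Matrix.kroneckerMap (· * ·) (kronPow A p) A)

/-- The `q`-th Kronecker power of a vector. -/
def vecKronPow {m : ℕ} (x : EucSp m) : (q : ℕ) → EucSp (m ^ q)
  | 0 => WithLp.toLp 2 fun _ => 1
  | q + 1 => WithLp.toLp 2 fun i =>
      vecKronPow x q (finProdFinEquiv.symm (finCongr (pow_succ m q) i)).1 *
        x (finProdFinEquiv.symm (finCongr (pow_succ m q) i)).2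

/-- The spectral radius of a real square matrix: the largest modulus of a complex eigenvalue. -/
def specRad {m : ℕ} (A : Matrix (Fin m) (Fin m) ℝ) : ℝ :=
  sSup ((fun z : ℂ => ‖z‖) '' spectrum ℂ (A.map Complex.ofReal))

/-- The entrywise expectation `E[A^{⊗p}]` of the `p`-th Kronecker power under `μ`. -/
def kronExp {m : ℕ} (μ : Measure (Mat m)) (p : ℕ) :
    Matrix (Fin (m ^ p)) (Fin (m ^ p)) ℝ :=
  Matrix.of fun i j => ∫ A, kronPow A p i j ∂μ

/-- `V` is a stochastic Lyapunov function for `μ` of degree `p` with growth rate `γ`. -/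
def IsStochLyap {m : ℕ} (μ : Measure (Mat m)) (p : ℕ) (γ : ℝ) (V : EucSp m → ℝ) : Prop :=
  (∃ C₁ : ℝ, 0 < C₁ ∧ ∃ C₂ : ℝ, 0 < C₂ ∧
    ∀ x : EucSp m, C₁ * ‖x‖ ^ p ≤ V x ∧ V x ≤ C₂ * ‖x‖ ^ p) ∧
  ∀ x : EucSp m, (∫ A, V (Matrix.toEuclideanLin A x) ∂μ) ≤ γ ^ p * V x

/-- `ν` is a norm on `ℝ^m`. -/
def IsNormFn {m : ℕ} (ν : EucSp m → ℝ) : Prop :=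
  (∀ x, 0 ≤ ν x) ∧ (∀ x, ν x = 0 ↔ x = 0) ∧
  (∀ (a : ℝ) (x : EucSp m), ν (a • x) = |a| * ν x) ∧
  (∀ x y : EucSp m, ν (x + y) ≤ ν x + ν y)

/-- `ν` is cone absolute with respect to `K`:
`ν x = inf {ν (v + w) : v, w ∈ K, x = v − w}`. -/
def IsConeAbsolute {m : ℕ} (K : Set (EucSp m)) (ν : EucSp m → ℝ) : Prop :=
  ∀ x : EucSp m, ν x = sInf {r : ℝ | ∃ v ∈ K, ∃ w ∈ K, x = v - w ∧ r = ν (v + w)}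

/-- The dual cone `K* = {f : fᵀx ≥ 0 for all x ∈ K}`. -/
def dualConeSet {m : ℕ} (K : Set (EucSp m)) : Set (EucSp m) :=
  {f | ∀ x ∈ K, 0 ≤ ⟪f, x⟫}

/-- `ν` is cone linear with respect to `K`: `ν = ⟪f, ·⟫` on `K` for some `f ∈ K*`. -/
def IsConeLinear {m : ℕ} (K : Set (EucSp m)) (ν : EucSp m → ℝ) : Prop :=
  ∃ f ∈ dualConeSet K, ∀ x ∈ K, ν x = ⟪f, x⟫

/-- The matrix norm induced by a norm `ν` on `ℝ^m`. -/
def inducedNormFn {m : ℕ} (ν : EucSp m → ℝ) (A : Matrix (Fin m) (Fin m) ℝ) : ℝ :=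
  sSup {c : ℝ | ∃ x : EucSp m, x ≠ 0 ∧ c = ν (Matrix.toEuclideanLin A x) / ν x}

open scoped Matrix.Norms.L2Operator

section MatrixInstances

variable {n : ℕ}

instance matBorelSpace : BorelSpace (Mat n) :=
  inferInstanceAs (BorelSpace (Fin n → Fin n → ℝ))

instance matSecondCountableTopology : SecondCountableTopology (Mat n) :=
  inferInstanceAs (SecondCountableTopology (Fin n → Fin n → ℝ))

instance matLebesgue_isAddHaarMeasure : (matLebesgue n).IsAddHaarMeasure :=
  Measure.pi.isAddHaarMeasure fun _ : Fin n => (volume : Measure (Fin n → ℝ))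

instance matLebesgue_sigmaFinite : SigmaFinite (matLebesgue n) :=
  inferInstanceAs (SigmaFinite (volume : Measure (Fin n → Fin n → ℝ)))

theorem opNorm_eq_norm (A : Mat n) : opNorm A = ‖A‖ := rfl

theorem opNorm_nonneg (A : Mat n) : 0 ≤ opNorm A := norm_nonneg A

theorem opNorm_mul_le (A B : Mat n) : opNorm (A * B) ≤ opNorm A * opNorm B :=
  Matrix.l2_opNorm_mul A B

theorem measurable_opNorm : Measurable (opNorm : Mat n → ℝ) :=
  (continuous_norm : Continuous fun A : Mat n => ‖A‖).measurable

end MatrixInstances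

section Products

variable {n : ℕ}

theorem prodRev_succ {k : ℕ} (f : Fin (k + 1) → Mat n) :
    prodRev f = prodRev (fun i => f i.succ) * f 0 := by
  simp [prodRev, List.ofFn_succ]

theorem continuous_prodRev (k : ℕ) : Continuous (prodRev : (Fin k → Mat n) → Mat n) := by
  induction k with
  | zero => exact continuous_of_discreteTopology
  | succ k ih =>
    have h : (prodRev : (Fin (k + 1) → Mat n) → Mat n) =
        fun f => prodRev (fun i => f i.succ) * f 0 := funext prodRev_succ
    rw [h]
    exact (ih.comp (by fun_prop)).mul (continuous_apply 0)

theorem measurable_prodRev (k : ℕ) : Measurable (prodRev : (Fin k → Mat n) → Mat n) :=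
  (continuous_prodRev k).measurable

theorem toEuclideanLin_mul (X Y : Mat n) (x : EucSp n) :
    Matrix.toEuclideanLin (X * Y) x = Matrix.toEuclideanLin X (Matrix.toEuclideanLin Y x) := by
  simp [Matrix.toLpLin_apply]

/-- A product of matrices from a set contained in `π(K)` belongs to `π(K)`. -/
theorem prodRev_mem_piCone {K : Set (EucSp n)} {k : ℕ} {f : Fin k → Mat n}
    (hf : ∀ i, f i ∈ piCone K) : prodRev f ∈ piCone K := by
  induction k with
  | zero => intro x hx; simpa [prodRev] using hx
  | succ k ih =>
    intro x hx
    rw [prodRev_succ]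
    rw [toEuclideanLin_mul]
    exact ih (fun i => hf i.succ) _ (hf 0 x hx)

theorem opNorm_one_le : opNorm (1 : Mat n) ≤ 1 :=
  ContinuousLinearMap.opNorm_le_bound _ zero_le_one fun x => by simp

theorem opNorm_prodRev_le {C : ℝ} (hC : 0 ≤ C) {k : ℕ} {f : Fin k → Mat n}
    (hf : ∀ i, opNorm (f i) ≤ C) : opNorm (prodRev f) ≤ C ^ k := by
  induction k with
  | zero => simpa [prodRev] using opNorm_one_le
  | succ k ih =>
    rw [prodRev_succ, pow_succ]
    exact (opNorm_mul_le _ _).trans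
      (mul_le_mul (ih fun i => hf i.succ) (hf 0) (opNorm_nonneg _) (by positivity))

end Products

section ProductLaw

variable {n : ℕ}

/-- The law of the product `A_k ⋯ A_1` of i.i.d. matrices with law `μ`. -/
def prodLaw (μ : Measure (Mat n)) (k : ℕ) : Measure (Mat n) :=
  (Measure.pi fun _ : Fin k => μ).map prodRev

instance prodLaw_isProbabilityMeasure (μ : Measure (Mat n)) [IsProbabilityMeasure μ] (k : ℕ) :
    IsProbabilityMeasure (prodLaw μ k) :=
  Measure.isProbabilityMeasure_map (measurable_prodRev k).aemeasurable

theorem prodLaw_zero (μ : Measure (Mat n)) [IsProbabilityMeasure μ] :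
    prodLaw μ 0 = Measure.dirac 1 := by
  have h : (prodRev : (Fin 0 → Mat n) → Mat n) = fun _ => 1 := by
    funext f
    simp [prodRev]
  rw [prodLaw, h, Measure.map_const]
  simp

theorem prodLaw_succ (μ : Measure (Mat n)) [IsProbabilityMeasure μ] (k : ℕ) :
    prodLaw μ (k + 1) = Measure.mconv (prodLaw μ k) μ := by
  refine Measure.ext_of_lintegral _ fun g hg => ?_
  have hcons := measurePreserving_piFinSuccAbove (fun _ : Fin (k + 1) => μ) 0
  have hinner : Measurable fun X : Mat n => ∫⁻ Y, g (X * Y) ∂μ :=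
    (hg.comp measurable_mul).lintegral_prod_right'
  rw [prodLaw, lintegral_map hg (measurable_prodRev _), Measure.lintegral_mconv hg, prodLaw,
    lintegral_map hinner (measurable_prodRev _)]
  have hG : Measurable fun z : Mat n × (Fin k → Mat n) => g (prodRev z.2 * z.1) :=
    hg.comp (((measurable_prodRev k).comp measurable_snd).mul measurable_fst)
  have := hcons.lintegral_comp hG
  rw [lintegral_prod_symm _ hG.aemeasurable] at this
  refine Eq.trans (lintegral_congr fun f => ?_) this
  rw [prodRev_succ]
  simp [Fin.tail_def]

theorem prodLaw_add (μ : Measure (Mat n)) [IsProbabilityMeasure μ] (a b : ℕ) :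
    prodLaw μ (a + b) = Measure.mconv (prodLaw μ a) (prodLaw μ b) := by
  induction b with
  | zero => rw [prodLaw_zero, Measure.mconv_dirac_one, add_zero]
  | succ b ih => rw [← add_assoc, prodLaw_succ, ih, prodLaw_succ, Measure.mconv_assoc]

/-- `E[‖A_k ⋯ A₁‖^p]` as an extended nonnegative real. -/
def kMoment (μ : Measure (Mat n)) (p k : ℕ) : ℝ≥0∞ :=
  ∫⁻ X, ENNReal.ofReal (opNorm X) ^ p ∂prodLaw μ k

theorem measurable_ofReal_opNorm_pow (p : ℕ) :
    Measurable fun X : Mat n => ENNReal.ofReal (opNorm X) ^ p :=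
  measurable_opNorm.ennreal_ofReal.pow_const p

theorem kExpNorm_eq_toReal (μ : Measure (Mat n)) (p k : ℕ) :
    kExpNorm μ p k = (kMoment μ p k).toReal := by
  rw [kExpNorm, integral_eq_lintegral_of_nonneg_ae
    (Eventually.of_forall fun f => pow_nonneg (opNorm_nonneg _) p)
    ((measurable_opNorm.comp (measurable_prodRev k)).pow_const p).aestronglyMeasurable,
    kMoment, prodLaw, lintegral_map (measurable_ofReal_opNorm_pow p) (measurable_prodRev k)]
  congr 1
  exact lintegral_congr fun f => ENNReal.ofReal_pow (opNorm_nonneg _) p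

end ProductLaw

section Support

variable {n : ℕ}

theorem msupport_eq_support (μ : Measure (Mat n)) : msupport μ = μ.support := by
  ext A
  rw [(Metric.nhds_basis_ball (x := A)).mem_measureSupport]
  simp only [msupport, Set.mem_ofPred_eq, pos_iff_ne_zero, Metric.ball, dist_eq_norm,
    opNorm_eq_norm]

theorem ae_mem_msupport (μ : Measure (Mat n)) : ∀ᵐ A ∂μ, A ∈ msupport μ := by
  rw [msupport_eq_support]
  exact Measure.support_mem_ae

theorem measure_pos_of_mem_msupport {μ : Measure (Mat n)} {A : Mat n} (hA : A ∈ msupport μ)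
    {U : Set (Mat n)} (hU : U ∈ 𝓝 A) : 0 < μ U := by
  rw [msupport_eq_support, Measure.mem_support_iff_forall] at hA
  exact hA U hU

theorem ae_pi_mem_msupport (μ : Measure (Mat n)) [IsProbabilityMeasure μ] (k : ℕ) :
    ∀ᵐ f ∂(Measure.pi fun _ : Fin k => μ), ∀ i, f i ∈ msupport μ :=
  ae_all_iff.2 fun i =>
    (Measure.quasiMeasurePreserving_eval (fun _ : Fin k => μ) i).ae (ae_mem_msupport μ)

end Support

section Cone

variable {n : ℕ} {K : Set (EucSp n)}

/-- A proper cone is normal: the norm is monotone on it up to a constant. -/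
theorem IsProperCone.exists_norm_le_mul_norm_add (hK : IsProperCone K) :
    ∃ C : ℝ, 0 < C ∧ ∀ x ∈ K, ∀ y ∈ K, ‖x‖ ≤ C * ‖x + y‖ := by
  have hcomp : IsCompact (Metric.sphere (0 : EucSp n × EucSp n) 1 ∩ K ×ˢ K) :=
    (isCompact_sphere _ _).inter_right (hK.isClosed.prod hK.isClosed)
  have hpos : ∀ z ∈ Metric.sphere (0 : EucSp n × EucSp n) 1 ∩ K ×ˢ K, 0 < ‖z.1 + z.2‖ := by
    rintro ⟨x, y⟩ ⟨hz, hx, hy⟩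
    refine norm_pos_iff.2 fun h => ?_
    have hyx : y = -x := (neg_eq_of_add_eq_zero_right h).symm
    have hx0 : x = 0 := hK.pointed x hx (hyx ▸ hy)
    subst hyx hx0
    simp at hz
  obtain ⟨m, hm, hle⟩ : ∃ m : ℝ, 0 < m ∧
      ∀ z ∈ Metric.sphere (0 : EucSp n × EucSp n) 1 ∩ K ×ˢ K, m ≤ ‖z.1 + z.2‖ := by
    rcases (Metric.sphere (0 : EucSp n × EucSp n) 1 ∩ K ×ˢ K).eq_empty_or_nonempty with h | h
    · exact ⟨1, one_pos, by simp [h]⟩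
    · obtain ⟨z, hz, hmin⟩ := hcomp.exists_isMinOn h
        (f := fun z : EucSp n × EucSp n => ‖z.1 + z.2‖) (by fun_prop)
      exact ⟨_, hpos z hz, fun w hw => hmin hw⟩
  refine ⟨m⁻¹, inv_pos.2 hm, fun x hx y hy => ?_⟩
  rcases eq_or_ne ((x, y) : EucSp n × EucSp n) 0 with h0 | h0
  · simp [(Prod.mk_eq_zero.1 h0).1, (Prod.mk_eq_zero.1 h0).2]
  set r : ℝ := ‖((x, y) : EucSp n × EucSp n)‖ with hr
  have hr0 : 0 < r := norm_pos_iff.2 h0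
  have hz := hle (r⁻¹ • (x, y)) ⟨by
      rw [mem_sphere_zero_iff_norm, norm_smul, ← hr, norm_inv, Real.norm_of_nonneg hr0.le,
        inv_mul_cancel₀ hr0.ne'],
    hK.smul_mem _ (inv_nonneg.2 hr0.le) x hx, hK.smul_mem _ (inv_nonneg.2 hr0.le) y hy⟩
  have hz' : m ≤ r⁻¹ * ‖x + y‖ := by
    simpa [← smul_add, norm_smul, abs_of_pos hr0] using hz
  have hxr : ‖x‖ ≤ r := norm_fst_le (x, y)
  rw [inv_mul_eq_div, le_div_iff₀ hm]
  rw [inv_mul_eq_div, le_div_iff₀ hr0] at hz'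
  nlinarith

theorem norm_toEuclideanLin_le (X : Mat n) (x : EucSp n) :
    ‖Matrix.toEuclideanLin X x‖ ≤ opNorm X * ‖x‖ :=
  (LinearMap.toContinuousLinearMap (Matrix.toEuclideanLin X)).le_opNorm x

/-- The operator norm of a matrix leaving `K` invariant is controlled by its value at an interior
point of `K`. -/
theorem IsProperCone.exists_opNorm_le (hK : IsProperCone K) {e : EucSp n} (he : e ∈ interior K) :
    ∃ C : ℝ, 0 < C ∧ ∀ X ∈ piCone K, opNorm X ≤ C * ‖Matrix.toEuclideanLin X e‖ := by
  obtain ⟨C, hC, hnorm⟩ := hK.exists_norm_le_mul_norm_add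
  obtain ⟨r, hr, hball⟩ := Metric.nhds_basis_closedBall.mem_iff.1 (mem_interior_iff_mem_nhds.1 he)
  refine ⟨(2 * C + 1) / r, by positivity, fun X hX => ?_⟩
  set a : ℝ := ‖Matrix.toEuclideanLin X e‖ with ha
  have hsmall : ∀ x : EucSp n, ‖x‖ ≤ r → ‖Matrix.toEuclideanLin X x‖ ≤ (2 * C + 1) * a := by
    intro x hx
    have hp := hX (e + x) (hball (by simpa [Metric.mem_closedBall, dist_eq_norm] using hx))
    have hm := hX (e - x) (hball (by simpa [Metric.mem_closedBall, dist_eq_norm] using hx))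
    have hsum := hnorm _ hp _ hm
    rw [← map_add, show e + x + (e - x) = (2 : ℝ) • e by rw [two_smul]; abel, map_smul, norm_smul,
      Real.norm_two, ← ha] at hsum
    have hdiff : Matrix.toEuclideanLin X x =
        Matrix.toEuclideanLin X (e + x) - Matrix.toEuclideanLin X e := by
      rw [← map_sub, add_sub_cancel_left]
    rw [hdiff]
    refine (norm_sub_le _ _).trans ?_
    rw [← ha]
    linarith
  refine ContinuousLinearMap.opNorm_le_bound _ (by positivity) fun x => ?_
  rw [LinearMap.coe_toContinuousLinearMap']
  rcases eq_or_ne x 0 with rfl | hx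
  · simp
  have hx0 : 0 < ‖x‖ := norm_pos_iff.2 hx
  have h := hsmall ((r / ‖x‖) • x) (by
    rw [norm_smul, Real.norm_of_nonneg (by positivity), div_mul_cancel₀ _ hx0.ne'])
  rw [map_smul, norm_smul, Real.norm_of_nonneg (by positivity), div_mul_eq_mul_div,
    div_le_iff₀ hx0] at h
  rw [div_mul_eq_mul_div, div_mul_eq_mul_div, le_div_iff₀ hr]
  linarith

/-- For every pair of vectors `x ≠ 0` and `y`, a rank-one matrix sends `x` to `y`. -/
theorem exists_toEuclideanLin_eq (x y : EucSp n) (hx : x ≠ 0) :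
    ∃ E : Mat n, Matrix.toEuclideanLin E x = y ∧ opNorm E ≤ ‖y‖ / ‖x‖ := by
  have hx0 : 0 < ‖x‖ := norm_pos_iff.2 hx
  let T : EucSp n →L[ℝ] EucSp n := ((‖x‖ ^ 2)⁻¹ • innerSL ℝ x).smulRight y
  refine ⟨Matrix.toEuclideanLin.symm T.toLinearMap, ?_, ?_⟩
  · simp [T, hx0.ne']
  · rw [opNorm, LinearEquiv.apply_symm_apply]
    refine ContinuousLinearMap.opNorm_le_bound _ (by positivity) fun z => ?_
    have hz : ‖(inner ℝ x z : ℝ)‖ ≤ ‖x‖ * ‖z‖ := norm_inner_le_norm x z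
    have hT : ‖T z‖ = (‖x‖ ^ 2)⁻¹ * ‖(inner ℝ x z : ℝ)‖ * ‖y‖ := by
      simp [T, norm_smul]
    calc ‖T z‖ = (‖x‖ ^ 2)⁻¹ * ‖(inner ℝ x z : ℝ)‖ * ‖y‖ := hT
      _ ≤ (‖x‖ ^ 2)⁻¹ * (‖x‖ * ‖z‖) * ‖y‖ := by gcongr
      _ = ‖y‖ / ‖x‖ * ‖z‖ := by field_simp

/-- Near an interior point of `π(K)`, inserting a matrix between two cone-preserving matrices
makes the operator norm supermultiplicative up to a constant. -/
theorem IsProperCone.exists_mul_opNorm_le (hK : IsProperCone K) {M : Mat n}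
    (hM : M ∈ interior (piCone K)) :
    ∃ c : ℝ, 0 < c ∧ ∃ U, IsOpen U ∧ M ∈ U ∧ ∀ B ∈ U, ∀ X ∈ piCone K, ∀ Y ∈ piCone K,
      c * (opNorm X * opNorm Y) ≤ opNorm (X * B * Y) := by
  obtain ⟨e, he⟩ := hK.solid
  obtain ⟨C, hC, hnorm⟩ := hK.exists_norm_le_mul_norm_add
  obtain ⟨D, hD, hop⟩ := hK.exists_opNorm_le he
  obtain ⟨r, hr, hball⟩ := Metric.nhds_basis_ball.mem_iff.1 (mem_interior_iff_mem_nhds.1 hM)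
  obtain ⟨δ, hδ, hδe⟩ : ∃ δ : ℝ, 0 < δ ∧ δ * ‖e‖ < r / 2 :=
    ⟨r / (2 * (‖e‖ + 1)), by positivity, by
      rw [div_mul_eq_mul_div, div_lt_div_iff₀ (by positivity) two_pos]
      nlinarith [norm_nonneg e]⟩
  refine ⟨δ / (C * D ^ 2 * (‖e‖ + 1)), by positivity, Metric.ball M (r / 2),
    Metric.isOpen_ball, Metric.mem_ball_self (half_pos hr), fun B hB X hX Y hY => ?_⟩
  set y := Matrix.toEuclideanLin Y e with hy
  have heK : e ∈ K := interior_subset he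
  have hyK : y ∈ K := hY e heK
  have hdom : Matrix.toEuclideanLin B y - (δ * ‖y‖) • e ∈ K := by
    rcases eq_or_ne y 0 with hy0 | hy0
    · rw [hy0] at hyK ⊢
      simpa using hyK
    · have hy1 : 0 < ‖y‖ := norm_pos_iff.2 hy0
      obtain ⟨E, hE, hEn⟩ := exists_toEuclideanLin_eq y ((δ * ‖y‖) • e) hy0
      have hmem : B - E ∈ piCone K := by
        refine hball ?_
        rw [Metric.mem_ball, dist_eq_norm] at hB ⊢
        have hE' : ‖E‖ < r / 2 := by
          refine lt_of_le_of_lt hEn ?_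
          rwa [norm_smul, Real.norm_of_nonneg (by positivity), mul_right_comm,
            mul_div_cancel_right₀ _ hy1.ne']
        calc ‖B - E - M‖ = ‖(B - M) - E‖ := by congr 1; abel
          _ ≤ ‖B - M‖ + ‖E‖ := norm_sub_le _ _
          _ < r := by linarith
      have := hmem y hyK
      rwa [map_sub, LinearMap.sub_apply, hE] at this
  have hXe : Matrix.toEuclideanLin X ((δ * ‖y‖) • e) ∈ K :=
    hX _ (hK.smul_mem _ (by positivity) e heK)
  have hle := hnorm _ hXe _ (hX _ hdom)
  rw [← map_add, add_sub_cancel, map_smul, norm_smul, Real.norm_of_nonneg (by positivity)] at hle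
  have hlast : ‖Matrix.toEuclideanLin X (Matrix.toEuclideanLin B y)‖ ≤
      opNorm (X * B * Y) * (‖e‖ + 1) := by
    rw [hy, ← toEuclideanLin_mul, ← toEuclideanLin_mul]
    refine (norm_toEuclideanLin_le _ e).trans ?_
    exact mul_le_mul_of_nonneg_left (by linarith) (opNorm_nonneg _)
  have hprod : opNorm X * opNorm Y ≤ (D * ‖Matrix.toEuclideanLin X e‖) * (D * ‖y‖) :=
    mul_le_mul (hop X hX) (hop Y hY) (opNorm_nonneg _) (by positivity)
  rw [div_mul_eq_mul_div, div_le_iff₀ (by positivity)]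
  calc δ * (opNorm X * opNorm Y)
      ≤ δ * ((D * ‖Matrix.toEuclideanLin X e‖) * (D * ‖y‖)) := by gcongr
    _ = D ^ 2 * (δ * ‖y‖ * ‖Matrix.toEuclideanLin X e‖) := by ring
    _ ≤ D ^ 2 * (C * (opNorm (X * B * Y) * (‖e‖ + 1))) := by
        refine mul_le_mul_of_nonneg_left (hle.trans ?_) (by positivity)
        exact mul_le_mul_of_nonneg_left hlast hC.le
    _ = opNorm (X * B * Y) * (C * D ^ 2 * (‖e‖ + 1)) := by ring

theorem continuous_toEuclideanLin_apply (x : EucSp n) :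
    Continuous fun A : Mat n => Matrix.toEuclideanLin A x := by
  let T : Mat n →ₗ[ℝ] EucSp n :=
    (LinearMap.applyₗ x).comp Matrix.toEuclideanLin.toLinearMap
  exact T.continuous_of_finiteDimensional

theorem IsProperCone.isClosed_piCone (hK : IsProperCone K) : IsClosed (piCone K) := by
  have h : piCone K = ⋂ x ∈ K, (fun A : Mat n => Matrix.toEuclideanLin A x) ⁻¹' K := by
    ext A
    simp [piCone, LeavesInv]
  rw [h]
  exact isClosed_biInter fun x _ => hK.isClosed.preimage (continuous_toEuclideanLin_apply x)

theorem IsProperCone.convex_piCone (hK : IsProperCone K) : Convex ℝ (piCone K) := by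
  intro A hA B hB a b ha hb hab x hx
  simpa using hK.convex (hA x hx) (hB x hx) ha hb hab

/-- If the support of `μ` preserves a proper cone `K` and misses the interior of `π(K)`, then `μ`
is singular. -/
theorem IsProperCone.eq_singularPart (hK : IsProperCone K) {μ : Measure (Mat n)}
    [IsProbabilityMeasure μ] (hinv : SetLeavesInv (msupport μ) K)
    (h : ∀ A ∈ msupport μ, A ∉ interior (piCone K)) :
    μ = μ.singularPart (matLebesgue n) := by
  have hdec := Measure.haveLebesgueDecomposition_add μ (matLebesgue n)
  have hfront : ∀ᵐ A ∂μ, A ∈ frontier (piCone K) := by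
    filter_upwards [ae_mem_msupport μ] with A hA
    exact ⟨subset_closure (hinv A hA), h A hA⟩
  have hac : (matLebesgue n).withDensity (μ.rnDeriv (matLebesgue n)) ≪ matLebesgue n :=
    withDensity_absolutelyContinuous _ _
  have hzero : (matLebesgue n).withDensity (μ.rnDeriv (matLebesgue n)) = 0 := by
    rw [← Measure.measure_univ_eq_zero, ← Set.union_compl_self (frontier (piCone K))]
    refine measure_union_null (hac (hK.convex_piCone.addHaar_frontier _)) ?_
    exact le_antisymm ((Measure.withDensity_rnDeriv_le μ (matLebesgue n) _).trans_eq hfront)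
      zero_le
  rwa [hzero, add_zero] at hdec

end Cone

section Radii

variable {n : ℕ}

/-- The largest norm of a product of `k` matrices from `M`. -/
def supProdNorm (M : Set (Mat n)) (k : ℕ) : ℝ :=
  sSup {x : ℝ | ∃ f : Fin k → Mat n, (∀ i, f i ∈ M) ∧ x = opNorm (prodRev f)}

theorem supProdNorm_nonneg (M : Set (Mat n)) (k : ℕ) : 0 ≤ supProdNorm M k := by
  refine Real.sSup_nonneg ?_
  rintro _ ⟨f, -, rfl⟩
  exact opNorm_nonneg _

theorem supProdNorm_le {M : Set (Mat n)} {C : ℝ} (hC : 0 ≤ C) (hM : ∀ A ∈ M, opNorm A ≤ C)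
    (k : ℕ) : supProdNorm M k ≤ C ^ k := by
  refine Real.sSup_le ?_ (by positivity)
  rintro _ ⟨f, hf, rfl⟩
  exact opNorm_prodRev_le hC fun i => hM _ (hf i)

theorem opNorm_prodRev_le_supProdNorm {M : Set (Mat n)} {C : ℝ} (hC : 0 ≤ C)
    (hM : ∀ A ∈ M, opNorm A ≤ C) {k : ℕ} {f : Fin k → Mat n} (hf : ∀ i, f i ∈ M) :
    opNorm (prodRev f) ≤ supProdNorm M k := by
  refine le_csSup ⟨C ^ k, ?_⟩ ⟨f, hf, rfl⟩
  rintro _ ⟨g, hg, rfl⟩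
  exact opNorm_prodRev_le hC fun i => hM _ (hg i)

theorem supProdNorm_rpow_nonneg (M : Set (Mat n)) (k : ℕ) :
    0 ≤ supProdNorm M k ^ ((1 : ℝ) / k) :=
  Real.rpow_nonneg (supProdNorm_nonneg M k) _

theorem isBoundedUnder_supProdNorm_rpow {M : Set (Mat n)} {C : ℝ} (hC : 0 ≤ C)
    (hM : ∀ A ∈ M, opNorm A ≤ C) :
    IsBoundedUnder (· ≤ ·) atTop fun k : ℕ => supProdNorm M k ^ ((1 : ℝ) / k) := by
  refine ⟨C, eventually_map.2 ?_⟩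
  filter_upwards [eventually_ge_atTop 1] with k hk
  calc supProdNorm M k ^ ((1 : ℝ) / k) ≤ (C ^ k) ^ ((1 : ℝ) / k) :=
        Real.rpow_le_rpow (supProdNorm_nonneg M k) (supProdNorm_le hC hM k) (by positivity)
    _ = C := by rw [one_div, Real.pow_rpow_inv_natCast hC (by omega)]

/-- Below the joint spectral radius, arbitrarily long products have large norm. -/
theorem frequently_exists_pow_lt_opNorm {M : Set (Mat n)} (hne : M.Nonempty) {t : ℝ}
    (ht : 0 ≤ t) (h : t < jsr M) :
    ∃ᶠ k : ℕ in atTop, ∃ f : Fin k → Mat n, (∀ i, f i ∈ M) ∧ t ^ k < opNorm (prodRev f) := by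
  have hfreq := frequently_lt_of_lt_limsup
    (isCoboundedUnder_le_of_le atTop (supProdNorm_rpow_nonneg M)) h
  refine (hfreq.and_eventually (eventually_ge_atTop 1)).mono fun k ⟨hk, hk1⟩ => ?_
  have hlt : t ^ k < supProdNorm M k := by
    have := pow_lt_pow_left₀ hk ht (by omega : k ≠ 0)
    rwa [one_div, Real.rpow_inv_natCast_pow (supProdNorm_nonneg M k) (by omega)] at this
  obtain ⟨A, hA⟩ := hne
  have hne' : {x : ℝ | ∃ f : Fin k → Mat n, (∀ i, f i ∈ M) ∧ x = opNorm (prodRev f)}.Nonempty :=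
    ⟨_, fun _ => A, fun _ => hA, rfl⟩
  obtain ⟨_, ⟨f, hf, rfl⟩, hlt'⟩ := exists_lt_of_lt_csSup hne' hlt
  exact ⟨f, hf, hlt'⟩

theorem msupport_nonempty (μ : Measure (Mat n)) [IsProbabilityMeasure μ] :
    (msupport μ).Nonempty := (ae_mem_msupport μ).exists

variable {μ : Measure (Mat n)} [IsProbabilityMeasure μ] {C : ℝ}

theorem kMoment_le (hC : 0 ≤ C) (hM : ∀ A ∈ msupport μ, opNorm A ≤ C) (p k : ℕ) :
    kMoment μ p k ≤ ENNReal.ofReal (supProdNorm (msupport μ) k ^ p) := by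
  rw [kMoment, prodLaw, lintegral_map (measurable_ofReal_opNorm_pow p) (measurable_prodRev k)]
  refine (lintegral_mono_ae (g := fun _ => ENNReal.ofReal (supProdNorm (msupport μ) k ^ p))
    ?_).trans_eq (by simp)
  filter_upwards [ae_pi_mem_msupport μ k] with f hf
  rw [← ENNReal.ofReal_pow (opNorm_nonneg _)]
  exact ENNReal.ofReal_le_ofReal (pow_le_pow_left₀ (opNorm_nonneg _)
    (opNorm_prodRev_le_supProdNorm hC hM hf) p)

theorem kExpNorm_nonneg (μ : Measure (Mat n)) (p k : ℕ) : 0 ≤ kExpNorm μ p k := by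
  rw [kExpNorm_eq_toReal]
  exact ENNReal.toReal_nonneg

theorem kExpNorm_rpow_nonneg (μ : Measure (Mat n)) (p k : ℕ) :
    0 ≤ kExpNorm μ p k ^ (1 / (p * k : ℝ)) :=
  Real.rpow_nonneg (kExpNorm_nonneg μ p k) _

theorem kExpNorm_rpow_le (hC : 0 ≤ C) (hM : ∀ A ∈ msupport μ, opNorm A ≤ C) {p : ℕ}
    (hp : p ≠ 0) (k : ℕ) :
    kExpNorm μ p k ^ (1 / (p * k : ℝ)) ≤ supProdNorm (msupport μ) k ^ ((1 : ℝ) / k) := by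
  have hs := supProdNorm_nonneg (msupport μ) k
  have hle : kExpNorm μ p k ≤ supProdNorm (msupport μ) k ^ p := by
    rw [kExpNorm_eq_toReal]
    exact ENNReal.toReal_le_of_le_ofReal (by positivity) (kMoment_le hC hM p k)
  calc kExpNorm μ p k ^ (1 / (p * k : ℝ))
      ≤ (supProdNorm (msupport μ) k ^ p) ^ (1 / (p * k : ℝ)) :=
        Real.rpow_le_rpow (kExpNorm_nonneg μ p k) hle (by positivity)
    _ = supProdNorm (msupport μ) k ^ ((1 : ℝ) / k) := by
        rw [← Real.rpow_natCast, ← Real.rpow_mul hs]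
        congr 1
        rw [mul_one_div, div_mul_cancel_left₀ (Nat.cast_ne_zero.2 hp), one_div]

theorem isBoundedUnder_kExpNorm_rpow (hC : 0 ≤ C) (hM : ∀ A ∈ msupport μ, opNorm A ≤ C) {p : ℕ}
    (hp : p ≠ 0) :
    IsBoundedUnder (· ≤ ·) atTop fun k : ℕ => kExpNorm μ p k ^ (1 / (p * k : ℝ)) :=
  (isBoundedUnder_supProdNorm_rpow hC hM).mono_le
    (Eventually.of_forall (kExpNorm_rpow_le hC hM hp))

theorem pRadius_le_jsr (hC : 0 ≤ C) (hM : ∀ A ∈ msupport μ, opNorm A ≤ C) {p : ℕ}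
    (hp : p ≠ 0) : pRadius μ p ≤ jsr (msupport μ) :=
  limsup_le_limsup (Eventually.of_forall (kExpNorm_rpow_le hC hM hp))
    (isCoboundedUnder_le_of_le atTop (kExpNorm_rpow_nonneg μ p))
    (isBoundedUnder_supProdNorm_rpow hC hM)

theorem pRadius_nonneg (hC : 0 ≤ C) (hM : ∀ A ∈ msupport μ, opNorm A ≤ C) {p : ℕ}
    (hp : p ≠ 0) : 0 ≤ pRadius μ p :=
  le_limsup_of_frequently_le (Frequently.of_forall (kExpNorm_rpow_nonneg μ p))
    (isBoundedUnder_kExpNorm_rpow hC hM hp)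

/-- A geometric lower bound on infinitely many moments bounds the `p`-radius from below. -/
theorem le_pRadius (hC : 0 ≤ C) (hM : ∀ A ∈ msupport μ, opNorm A ≤ C) {p : ℕ}
    (hp : p ≠ 0) {t D : ℝ} (ht : 0 < t) (hD : 0 < D)
    (h : ∃ᶠ k : ℕ in atTop, ENNReal.ofReal (D * t ^ (p * k)) ≤ kMoment μ p k) :
    t ≤ pRadius μ p := by
  have hlim : Tendsto (fun k : ℕ => D ^ (1 / (p * k : ℝ)) * t) atTop (𝓝 t) := by
    have hexp : Tendsto (fun k : ℕ => 1 / (p * k : ℝ)) atTop (𝓝 0) := by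
      refine Tendsto.div_atTop tendsto_const_nhds ?_
      exact tendsto_natCast_atTop_atTop.const_mul_atTop (by positivity)
    have := (tendsto_const_nhds.rpow hexp (Or.inl hD.ne') :
      Tendsto (fun k : ℕ => D ^ (1 / (p * k : ℝ))) atTop (𝓝 (D ^ (0 : ℝ))))
    simpa using this.mul_const t
  refine le_of_forall_lt_imp_le_of_dense fun a ha => ?_
  refine le_limsup_of_frequently_le ?_ (isBoundedUnder_kExpNorm_rpow hC hM hp)
  refine ((h.and_eventually (hlim.eventually_const_lt ha)).and_eventually
    (eventually_ge_atTop 1)).mono fun k ⟨⟨hk, hak⟩, hk1⟩ => hak.le.trans ?_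
  have hle : D * t ^ (p * k) ≤ kExpNorm μ p k := by
    rw [kExpNorm_eq_toReal]
    exact (ENNReal.ofReal_le_iff_le_toReal
      ((kMoment_le hC hM p k).trans_lt ENNReal.ofReal_lt_top).ne).1 hk
  calc D ^ (1 / (p * k : ℝ)) * t = (D * t ^ (p * k)) ^ (1 / (p * k : ℝ)) := by
        rw [Real.mul_rpow hD.le (by positivity), ← Nat.cast_mul, one_div,
          Real.pow_rpow_inv_natCast ht.le (mul_ne_zero hp (by omega))]
    _ ≤ _ := Real.rpow_le_rpow (by positivity) hle (by positivity)

end Radii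

section LowerBound

variable {n : ℕ} {μ : Measure (Mat n)} [IsProbabilityMeasure μ] {C : ℝ}

theorem eventually_pow_le_mul_pow {q s t : ℝ} (hq : 0 < q) (hs : 0 < s) (hst : s < t) :
    ∀ᶠ p : ℕ in atTop, s ^ p ≤ q * t ^ p := by
  have ht : 0 < t := hs.trans hst
  have h := tendsto_pow_atTop_nhds_zero_of_lt_one (div_nonneg hs.le ht.le) ((div_lt_one ht).2 hst)
  filter_upwards [h.eventually_le_const hq] with p hp
  rwa [div_pow, div_le_iff₀ (by positivity)] at hp

/-- If every point of the support is an atom of mass at least `w`, the `p`-radii eventually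
exceed every number below the joint spectral radius. -/
theorem eventually_le_pRadius_of_atomic (hC : 0 ≤ C) (hM : ∀ A ∈ msupport μ, opNorm A ≤ C)
    {w : ℝ} (hw : 0 < w) (hatom : ∀ A ∈ msupport μ, ENNReal.ofReal w ≤ μ {A}) {t : ℝ}
    (ht : 0 < t) (htj : t < jsr (msupport μ)) : ∀ᶠ p : ℕ in atTop, t ≤ pRadius μ p := by
  obtain ⟨s, hts, hsj⟩ := exists_between htj
  have hs : 0 < s := ht.trans hts
  filter_upwards [eventually_pow_le_mul_pow hw ht hts, eventually_ne_atTop 0] with p hp hp0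
  refine le_pRadius hC hM hp0 ht one_pos ?_
  refine (frequently_exists_pow_lt_opNorm (msupport_nonempty μ) hs.le hsj).mono ?_
  rintro k ⟨f, hf, hlt⟩
  rw [kMoment, prodLaw, lintegral_map (measurable_ofReal_opNorm_pow p) (measurable_prodRev k)]
  refine le_trans ?_ (setLIntegral_le_lintegral {f} _)
  rw [lintegral_singleton, Measure.pi_singleton]
  calc ENNReal.ofReal (1 * t ^ (p * k)) ≤ ENNReal.ofReal ((s ^ k) ^ p * w ^ k) := by
        refine ENNReal.ofReal_le_ofReal ?_
        calc 1 * t ^ (p * k) = (t ^ p) ^ k := by rw [one_mul, pow_mul]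
          _ ≤ (w * s ^ p) ^ k := pow_le_pow_left₀ (by positivity) hp k
          _ = (s ^ k) ^ p * w ^ k := by rw [mul_pow, ← pow_mul, ← pow_mul]; ring
    _ = ENNReal.ofReal (s ^ k) ^ p * ∏ _i : Fin k, ENNReal.ofReal w := by
        rw [ENNReal.ofReal_mul (by positivity), ENNReal.ofReal_pow (by positivity) p,
          ENNReal.ofReal_pow hw.le, Finset.prod_const, Finset.card_univ, Fintype.card_fin]
    _ ≤ _ := by
        refine mul_le_mul' ?_ (Finset.prod_le_prod' fun i _ => hatom _ (hf i))
        exact pow_le_pow_left' (ENNReal.ofReal_le_ofReal hlt.le) p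

theorem exists_le_measure_singleton {ν : Measure (Mat n)} (hν : IsFiniteDiracComb ν) :
    ∃ w : ℝ, 0 < w ∧ ∀ A ∈ msupport ν, ENNReal.ofReal w ≤ ν {A} := by
  rcases hν with rfl | ⟨N, w, Ms, hw, rfl⟩
  · exact ⟨1, one_pos, by simp [msupport_eq_support]⟩
  set ν : Measure (Mat n) := ∑ i, ENNReal.ofReal (w i) • Measure.dirac (Ms i) with hν
  have hsub : msupport ν ⊆ Set.range Ms := by
    rw [msupport_eq_support]
    refine Measure.support_subset_of_isClosed (Set.finite_range Ms).isClosed ?_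
    rw [mem_ae_iff, hν]
    simp [Measure.finsetSum_apply, Measure.dirac_apply]
  obtain ⟨v, hv, hvw⟩ : ∃ v : ℝ, 0 < v ∧ ∀ i, v ≤ w i := by
    rcases isEmpty_or_nonempty (Fin N) with h | h
    · exact ⟨1, one_pos, fun i => h.elim i⟩
    · obtain ⟨i, hi⟩ := Finite.exists_min w
      exact ⟨w i, hw i, hi⟩
  refine ⟨v, hv, fun A hA => ?_⟩
  obtain ⟨i, rfl⟩ := hsub hA
  rw [hν, Measure.finsetSum_apply]
  refine le_trans ?_ (Finset.single_le_sum (f := fun j =>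
    (ENNReal.ofReal (w j) • Measure.dirac (Ms j) : Measure (Mat n)) {Ms i})
    (fun _ _ => zero_le) (Finset.mem_univ i))
  simpa using ENNReal.ofReal_le_ofReal (hvw i)

variable {K : Set (EucSp n)}

theorem ae_prodLaw_mem_piCone (hK : IsProperCone K) (hinv : SetLeavesInv (msupport μ) K) (k : ℕ) :
    ∀ᵐ X ∂prodLaw μ k, X ∈ piCone K := by
  refine (ae_map_iff (p := fun X => X ∈ piCone K) (measurable_prodRev k).aemeasurable
    hK.isClosed_piCone.measurableSet).2 ?_
  filter_upwards [ae_pi_mem_msupport μ k] with f hf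
  exact prodRev_mem_piCone fun i => hinv _ (hf i)

/-- Moments are supermultiplicative up to one intermediate factor. -/
theorem mul_kMoment_le (hK : IsProperCone K) (hinv : SetLeavesInv (msupport μ) K) {c : ℝ}
    (hc : 0 ≤ c) {U : Set (Mat n)} (hU : IsOpen U)
    (hle : ∀ B ∈ U, ∀ X ∈ piCone K, ∀ Y ∈ piCone K,
      c * (opNorm X * opNorm Y) ≤ opNorm (X * B * Y)) (p a b : ℕ) :
    ENNReal.ofReal c ^ p * μ U * (kMoment μ p a * kMoment μ p b) ≤ kMoment μ p (a + 1 + b) := by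
  have hg := measurable_ofReal_opNorm_pow (n := n) p
  have hinner : Measurable fun Z : Mat n =>
      ∫⁻ Y, ENNReal.ofReal (opNorm (Z * Y)) ^ p ∂prodLaw μ b :=
    (hg.comp measurable_mul).lintegral_prod_right'
  have hsplit : kMoment μ p (a + 1 + b) = ∫⁻ X, ∫⁻ B, ∫⁻ Y,
      ENNReal.ofReal (opNorm (X * B * Y)) ^ p ∂prodLaw μ b ∂μ ∂prodLaw μ a := by
    rw [kMoment, prodLaw_add, prodLaw_succ, Measure.lintegral_mconv hg,
      Measure.lintegral_mconv hinner]
  have hpt : ∀ X ∈ piCone K, ∀ B ∈ U,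
      ENNReal.ofReal c ^ p * ENNReal.ofReal (opNorm X) ^ p * kMoment μ p b ≤
        ∫⁻ Y, ENNReal.ofReal (opNorm (X * B * Y)) ^ p ∂prodLaw μ b := by
    intro X hX B hB
    rw [kMoment, ← lintegral_const_mul _ hg]
    refine lintegral_mono_ae ?_
    filter_upwards [ae_prodLaw_mem_piCone hK hinv b] with Y hY
    rw [← mul_pow, ← mul_pow, ← ENNReal.ofReal_mul hc,
      ← ENNReal.ofReal_mul (mul_nonneg hc (opNorm_nonneg _)), mul_assoc]
    exact pow_le_pow_left' (ENNReal.ofReal_le_ofReal (hle B hB X hX Y hY)) p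
  rw [hsplit]
  calc ENNReal.ofReal c ^ p * μ U * (kMoment μ p a * kMoment μ p b)
      = ∫⁻ X, ENNReal.ofReal c ^ p * μ U * kMoment μ p b * ENNReal.ofReal (opNorm X) ^ p
          ∂prodLaw μ a := by
        rw [lintegral_const_mul _ hg, ← kMoment]
        ring
    _ ≤ _ := by
        refine lintegral_mono_ae ?_
        filter_upwards [ae_prodLaw_mem_piCone hK hinv a] with X hX
        refine le_trans ?_ (setLIntegral_le_lintegral U _)
        refine le_trans (le_of_eq ?_) (setLIntegral_mono' hU.measurableSet (hpt X hX))
        rw [setLIntegral_const]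
        ring

/-- If the support meets the interior of `π(K)`, the `p`-radii eventually exceed every number
below the joint spectral radius. -/
theorem eventually_le_pRadius_of_mem_interior (hC : 0 ≤ C)
    (hM : ∀ A ∈ msupport μ, opNorm A ≤ C) (hK : IsProperCone K)
    (hinv : SetLeavesInv (msupport μ) K) {M : Mat n} (hMs : M ∈ msupport μ)
    (hMi : M ∈ interior (piCone K)) {t : ℝ} (ht : 0 < t) (htj : t < jsr (msupport μ)) :
    ∀ᶠ p : ℕ in atTop, t ≤ pRadius μ p := by
  obtain ⟨c, hc, U, hUo, hMU, hU⟩ := hK.exists_mul_opNorm_le hMi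
  obtain ⟨s, hts, hsj⟩ := exists_between htj
  obtain ⟨r, hsr, hrj⟩ := exists_between hsj
  have hs : 0 < s := ht.trans hts
  have hr : 0 < r := hs.trans hsr
  obtain ⟨k, ⟨f, hf, hlt⟩, hk⟩ :=
    ((frequently_exists_pow_lt_opNorm (msupport_nonempty μ) hr.le hrj).and_eventually
      (eventually_pow_le_mul_pow (div_pos hc hs) hs hsr)).exists
  have hk' : s ^ (k + 1) ≤ c * r ^ k := by
    rw [div_mul_eq_mul_div, le_div_iff₀ hs] at hk
    rwa [pow_succ]
  set V : Set (Mat n) := {X | r ^ k < opNorm X} with hV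
  have hVo : IsOpen V :=
    isOpen_lt continuous_const (continuous_norm : Continuous fun X : Mat n => ‖X‖)
  have hVpos : 0 < prodLaw μ k V := by
    rw [prodLaw, Measure.map_apply (measurable_prodRev k) hVo.measurableSet]
    have hnhds : prodRev ⁻¹' V ∈ 𝓝 f := (hVo.preimage (continuous_prodRev k)).mem_nhds hlt
    rw [nhds_pi, Filter.mem_pi'] at hnhds
    obtain ⟨I, W, hW, hIW⟩ := hnhds
    refine lt_of_lt_of_le ?_ (measure_mono ((Set.pi_mono' (fun i _ => subset_rfl)
      (Set.subset_univ _)).trans hIW))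
    rw [Measure.pi_pi]
    exact pos_iff_ne_zero.2
      (Finset.prod_ne_zero_iff.2 fun i _ => (measure_pos_of_mem_msupport (hf i) (hW i)).ne')
  have hUpos : 0 < μ U := measure_pos_of_mem_msupport hMs (hUo.mem_nhds hMU)
  set q : ℝ≥0∞ := μ U * prodLaw μ k V with hq
  have hqtop : q ≠ ∞ := ENNReal.mul_ne_top (measure_ne_top _ _) (measure_ne_top _ _)
  have hq0 : 0 < q.toReal := ENNReal.toReal_pos (mul_ne_zero hUpos.ne' hVpos.ne') hqtop
  have hpow : t ^ (k + 1) < s ^ (k + 1) := pow_lt_pow_left₀ hts ht.le (by omega)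
  filter_upwards [eventually_pow_le_mul_pow hq0 (by positivity) hpow, eventually_ne_atTop 0]
    with p hp hp0
  have hmom : ENNReal.ofReal (r ^ k) ^ p * prodLaw μ k V ≤ kMoment μ p k := by
    rw [kMoment, ← setLIntegral_const]
    refine le_trans (setLIntegral_mono' hVo.measurableSet fun X hX => ?_)
      (setLIntegral_le_lintegral V _)
    exact pow_le_pow_left' (ENNReal.ofReal_le_ofReal (le_of_lt hX)) p
  set v : ℕ → ℝ≥0∞ := fun j => ENNReal.ofReal c ^ p * μ U * kMoment μ p j with hv
  have hvmul : ∀ a b, v a * v b ≤ v (a + 1 + b) := fun a b => by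
    refine le_trans (le_of_eq ?_)
      (mul_le_mul_right (mul_kMoment_le hK hinv hc.le hUo hU p a b) (ENNReal.ofReal c ^ p * μ U))
    simp only [hv]
    ring
  have hvk : ENNReal.ofReal ((t ^ (k + 1)) ^ p) ≤ v k := by
    calc ENNReal.ofReal ((t ^ (k + 1)) ^ p)
        ≤ ENNReal.ofReal (q.toReal * (c * r ^ k) ^ p) := by
          refine ENNReal.ofReal_le_ofReal (hp.trans ?_)
          gcongr
      _ = q * ENNReal.ofReal (c * r ^ k) ^ p := by
          rw [ENNReal.ofReal_mul hq0.le, ENNReal.ofReal_toReal hqtop,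
            ENNReal.ofReal_pow (by positivity)]
      _ = ENNReal.ofReal c ^ p * μ U * (ENNReal.ofReal (r ^ k) ^ p * prodLaw μ k V) := by
          rw [ENNReal.ofReal_mul hc.le, mul_pow, hq]
          ring
      _ ≤ v k := mul_le_mul_right hmom _
  have hviter : ∀ m, v k ^ (m + 1) ≤ v (m * (k + 1) + k) := fun m => by
    induction m with
    | zero => simp
    | succ m ih =>
      calc v k ^ (m + 1 + 1) = v k ^ (m + 1) * v k := pow_succ _ _
        _ ≤ v (m * (k + 1) + k) * v k := mul_le_mul_left ih _
        _ ≤ v (m * (k + 1) + k + 1 + k) := hvmul _ _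
        _ = v ((m + 1) * (k + 1) + k) := by congr 1; ring
  refine le_pRadius hC hM hp0 ht (D := t ^ p / c ^ p) (by positivity) ?_
  refine frequently_atTop.2 fun m => ⟨m * (k + 1) + k, by nlinarith, ?_⟩
  have hj : ENNReal.ofReal (t ^ (p * (m * (k + 1) + k + 1))) ≤
      ENNReal.ofReal (c ^ p) * kMoment μ p (m * (k + 1) + k) := by
    calc ENNReal.ofReal (t ^ (p * (m * (k + 1) + k + 1)))
        = ENNReal.ofReal ((t ^ (k + 1)) ^ p) ^ (m + 1) := by
          rw [← ENNReal.ofReal_pow (by positivity), ← pow_mul, ← pow_mul]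
          congr 2
          ring
      _ ≤ v k ^ (m + 1) := pow_le_pow_left' hvk _
      _ ≤ v (m * (k + 1) + k) := hviter m
      _ ≤ ENNReal.ofReal (c ^ p) * kMoment μ p (m * (k + 1) + k) := by
          rw [ENNReal.ofReal_pow hc.le]
          exact mul_le_mul_left (mul_le_of_le_one_right' prob_le_one) _
  rw [show t ^ p / c ^ p * t ^ (p * (m * (k + 1) + k)) =
      (c ^ p)⁻¹ * t ^ (p * (m * (k + 1) + k + 1)) by ring, ENNReal.ofReal_mul (by positivity),
    ENNReal.ofReal_inv_of_pos (by positivity)]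
  refine ENNReal.inv_mul_le_iff ?_ ENNReal.ofReal_ne_top |>.2 hj
  exact (ENNReal.ofReal_pos.2 (by positivity)).ne'

end LowerBound

/-- For a Borel probability measure `μ` on real `n × n` matrices with bounded
support whose support leaves a proper cone invariant (A2) and whose singular part w.r.t.
Lebesgue measure is zero or a finite combination of Dirac measures (A3), the joint spectral
radius of the support of `μ` is the limit as `p → ∞` of the `p`-radius of `μ`. -/
theorem stmt0 (n : ℕ) (hn : 1 ≤ n) (μ : Measure (Mat n)) [IsProbabilityMeasure μ]
    (hbdd : HasBoundedSupport μ)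
    (K : Set (EucSp n)) (hK : IsProperCone K) (hinv : SetLeavesInv (msupport μ) K)
    (hsing : IsFiniteDiracComb (μ.singularPart (matLebesgue n))) :
    Tendsto (fun p : ℕ => pRadius μ p) atTop (𝓝 (jsr (msupport μ))) := by
  obtain ⟨C, hC⟩ := hbdd
  obtain ⟨A, hA⟩ := msupport_nonempty μ
  have hC0 : 0 ≤ C := (opNorm_nonneg A).trans (hC A hA)
  have hlower : ∀ t : ℝ, 0 < t → t < jsr (msupport μ) → ∀ᶠ p : ℕ in atTop, t ≤ pRadius μ p := by
    intro t ht htj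
    by_cases hint : ∃ M ∈ msupport μ, M ∈ interior (piCone K)
    · obtain ⟨M, hMs, hMi⟩ := hint
      exact eventually_le_pRadius_of_mem_interior hC0 hC hK hinv hMs hMi ht htj
    · push Not at hint
      rw [← hK.eq_singularPart hinv hint] at hsing
      obtain ⟨w, hw, hatom⟩ := exists_le_measure_singleton hsing
      exact eventually_le_pRadius_of_atomic hC0 hC hw hatom ht htj
  refine tendsto_order.2 ⟨fun a ha => ?_, fun a ha => ?_⟩
  · rcases lt_or_ge a 0 with ha0 | ha0
    · filter_upwards [eventually_ne_atTop 0] with p hp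
      exact ha0.trans_le (pRadius_nonneg hC0 hC hp)
    · obtain ⟨t, hat, htj⟩ := exists_between ha
      filter_upwards [hlower t (ha0.trans_lt hat) htj] with p hp
      exact hat.trans_le hp
  · filter_upwards [eventually_ne_atTop 0] with p hp
    exact (pRadius_le_jsr hC0 hC hp).trans_lt ha

end
end

section
/- Let n ≥ 1, let M₁, …, M_N ∈ ℝ^{n×n}, let p₁, …, p_N be positive reals summing to 1, and let μ = p₁ δ_{M₁} + ⋯ + p_N δ_{M_N} be the corresponding finitely supported probability measure on ℝ^{n×n}. Let A be a random matrix with law μ and let M = supp μ = {M₁, …, M_N}. Then ρ̂(M) = lim_{p→∞} ρ(E[A^{⊗(2p)}])^{1/(2p)}, where the limit is over positive integers p. -/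
open MeasureTheory Filter Topology
open scoped ENNReal RealInnerProductSpace

noncomputable section

instance matMeasurableSingletonClass (n : ℕ) : MeasurableSingletonClass (Mat n) :=
  inferInstanceAs (MeasurableSingletonClass (Fin n → Fin n → ℝ))

lemma abs_apply_le_opNorm {m : ℕ} (A : Mat m) (i j : Fin m) : |A i j| ≤ opNorm A := by
  have h := (LinearMap.toContinuousLinearMap (Matrix.toEuclideanLin A)).le_opNorm
    (EuclideanSpace.single j (1 : ℝ))
  have h2 := PiLp.norm_apply_le
    (Matrix.toEuclideanLin A (EuclideanSpace.single j (1 : ℝ))) i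
  simp only [LinearMap.coe_toContinuousLinearMap', PiLp.norm_single, norm_one,
    mul_one] at h
  have h3 : (Matrix.toEuclideanLin A (EuclideanSpace.single j (1 : ℝ))) i = A i j := by
    simp [Matrix.toLpLin_apply]
  rw [h3, Real.norm_eq_abs] at h2
  exact h2.trans h

lemma opNorm_le_of_abs_apply_le {m : ℕ} (A : Mat m) {c : ℝ} (hc : 0 ≤ c)
    (h : ∀ i j, |A i j| ≤ c) : opNorm A ≤ m ^ 2 * c := by
  refine ContinuousLinearMap.opNorm_le_bound _ (by positivity) fun x => ?_
  have hx : Matrix.toEuclideanLin A x =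
      ∑ i, EuclideanSpace.single i (∑ j, A i j * x j) := by
    ext i
    simp [Matrix.toLpLin_apply, Matrix.mulVec, dotProduct, Finset.sum_apply, Pi.single_apply]
  rw [LinearMap.coe_toContinuousLinearMap', hx]
  calc _ ≤ ∑ i : Fin m, ‖EuclideanSpace.single i (∑ j, A i j * x j)‖ := norm_sum_le _ _
    _ ≤ ∑ i : Fin m, ∑ j : Fin m, c * ‖x‖ := by
        refine Finset.sum_le_sum fun i _ => ?_
        rw [PiLp.norm_single]
        refine (norm_sum_le _ _).trans (Finset.sum_le_sum fun j _ => ?_)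
        rw [norm_mul]
        exact mul_le_mul (h i j) (PiLp.norm_apply_le x j) (norm_nonneg _) hc
    _ = m ^ 2 * c * ‖x‖ := by simp; ring

lemma kronPow_one {m : ℕ} (p : ℕ) : kronPow (1 : Mat m) p = 1 := by
  induction p with
  | zero => rfl
  | succ p ih =>
    rw [kronPow, ih]
    rw [Matrix.one_kronecker_one, Matrix.reindex_apply, Matrix.submatrix_one_equiv]

lemma kronPow_mul {m : ℕ} (A B : Mat m) (p : ℕ) :
    kronPow (A * B) p = kronPow A p * kronPow B p := by
  induction p with
  | zero => exact (mul_one (1 : Matrix (Fin (m ^ 0)) (Fin (m ^ 0)) ℝ)).symm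
  | succ p ih =>
    rw [kronPow, kronPow, kronPow, ih]
    rw [Matrix.mul_kronecker_mul]
    simp only [Matrix.reindex_apply, Matrix.submatrix_mul_equiv]

lemma abs_kronPow_apply_le {m : ℕ} (A : Mat m) {c : ℝ} (h : ∀ i j, |A i j| ≤ c) (p : ℕ)
    (i j : Fin (m ^ p)) : |kronPow A p i j| ≤ c ^ p := by
  induction p with
  | zero =>
    simp only [kronPow, Matrix.one_apply, pow_zero]
    split_ifs <;> simp
  | succ p ih =>
    simp only [kronPow, Matrix.reindex_apply, Matrix.submatrix_apply, Matrix.kroneckerMap_apply,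
      abs_mul, pow_succ]
    refine mul_le_mul (ih _ _) (h _ _) (abs_nonneg _) (le_trans (abs_nonneg _) (ih ?_ ?_))
    exacts [(finProdFinEquiv.symm (finCongr (pow_succ m p) i)).1,
      (finProdFinEquiv.symm (finCongr (pow_succ m p) i)).1]

/-- Every entry of `A` occurs as a `p`-th power in `A^{⊗p}`, at a position not depending on `A`. -/
lemma exists_kronPow_apply_eq_pow (m p : ℕ) : ∃ d : Fin m → Fin (m ^ p),
    ∀ (A : Mat m) (i j : Fin m), kronPow A p (d i) (d j) = A i j ^ p := by
  induction p with
  | zero =>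
    refine ⟨fun _ => ⟨0, by simp⟩, fun A i j => by simp [kronPow]⟩
  | succ p ih =>
    obtain ⟨d, hd⟩ := ih
    refine ⟨fun i => (finProdFinEquiv.trans (finCongr (pow_succ m p).symm)) (d i, i),
      fun A i j => ?_⟩
    simp only [kronPow, Matrix.reindex_apply, Matrix.submatrix_apply, Equiv.symm_apply_apply,
      Matrix.kroneckerMap_apply, hd, pow_succ]

lemma kronExp_sum_dirac {n N : ℕ} (Ms : Fin N → Mat n) (w : Fin N → ℝ) (hw : ∀ i, 0 < w i)
    (p : ℕ) :
    kronExp (∑ i, ENNReal.ofReal (w i) • Measure.dirac (Ms i)) p =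
      ∑ i, w i • kronPow (Ms i) p := by
  ext a b
  simp only [kronExp, Matrix.of_apply]
  rw [integral_finsetSum_measure]
  · simp [Matrix.sum_apply, integral_smul_measure, ENNReal.toReal_ofReal (hw _).le]
  · intro i _
    exact (integrable_dirac (by simp)).smul_measure ENNReal.ofReal_ne_top

lemma prodRev_cons {m k : ℕ} (A : Mat m) (f : Fin k → Mat m) :
    prodRev (Fin.cons A f : Fin (k + 1) → Mat m) = prodRev f * A := by
  simp [prodRev, List.ofFn_succ]

lemma sum_smul_kronPow_pow {n N : ℕ} (Ms : Fin N → Mat n) (w : Fin N → ℝ) (p k : ℕ) :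
    (∑ i, w i • kronPow (Ms i) p) ^ k =
      ∑ f : Fin k → Fin N, (∏ t, w (f t)) • kronPow (prodRev fun t => Ms (f t)) p := by
  induction k with
  | zero => simp [prodRev, kronPow_one]
  | succ k ih =>
    rw [pow_succ, ih, ← (Fin.consEquiv fun _ => Fin N).sum_comp, Fintype.sum_prod_type_right,
      Finset.sum_mul]
    refine Finset.sum_congr rfl fun f _ => ?_
    rw [Finset.mul_sum]
    refine Finset.sum_congr rfl fun i _ => ?_
    have h : (fun t => Ms ((Fin.cons i f : Fin (k + 1) → Fin N) t)) =
        (Fin.cons (Ms i) fun t => Ms (f t) : Fin (k + 1) → Mat n) := by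
      funext t
      refine Fin.cases ?_ (fun t => ?_) t <;> simp
    simp only [Fin.consEquiv_apply, h, prodRev_cons, kronPow_mul, Fin.prod_univ_succ,
      Fin.cons_zero, Fin.cons_succ, smul_mul_smul_comm, mul_comm (w i)]

open scoped Matrix.Norms.Operator in
/-- Gelfand's formula for a real matrix, with a norm controlled by the entries. -/
lemma exists_norm_pow_tendsto_specRad {m : ℕ} (hm : 0 < m) (A : Mat m) :
    ∃ G : ℕ → ℝ, (∀ k i j, |(A ^ k) i j| ≤ G k) ∧
      (∀ k c, (∀ i j, |(A ^ k) i j| ≤ c) → G k ≤ m * c) ∧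
      Tendsto (fun k : ℕ => G k ^ (1 / k : ℝ)) atTop (𝓝 (specRad A)) := by
  have : Nonempty (Fin m) := ⟨⟨0, hm⟩⟩
  set B : Matrix (Fin m) (Fin m) ℂ := A.map Complex.ofReal with hB
  have hpow : ∀ k i j, ‖(B ^ k) i j‖ = |(A ^ k) i j| := by
    intro k i j
    have : B ^ k = (A ^ k).map Complex.ofReal :=
      (map_pow (Complex.ofRealHom.mapMatrix (m := Fin m)) A k).symm
    rw [this, Matrix.map_apply, Complex.norm_real, Real.norm_eq_abs]
  refine ⟨fun k => ‖B ^ k‖, fun k i j => ?_, fun k c hc => ?_, ?_⟩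
  · rw [← hpow]
    change _ ≤ ‖B ^ k‖
    rw [Matrix.linfty_opNorm_def]
    have h1 : ‖(B ^ k) i j‖₊ ≤ ∑ j, ‖(B ^ k) i j‖₊ :=
      Finset.single_le_sum (f := fun j => ‖(B ^ k) i j‖₊) (fun _ _ => zero_le)
        (Finset.mem_univ j)
    exact_mod_cast h1.trans
      (Finset.le_sup (f := fun i => ∑ j, ‖(B ^ k) i j‖₊) (Finset.mem_univ i))
  · have hc0 : 0 ≤ c := (abs_nonneg _).trans (hc ⟨0, hm⟩ ⟨0, hm⟩)
    lift c to NNReal using hc0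
    change ‖B ^ k‖ ≤ _
    rw [Matrix.linfty_opNorm_def]
    have : ((Finset.univ : Finset (Fin m)).sup fun i => ∑ j, ‖(B ^ k) i j‖₊) ≤ m * c := by
      refine Finset.sup_le fun i _ => ?_
      calc _ ≤ ∑ _j : Fin m, c := Finset.sum_le_sum fun j _ => by
            rw [← NNReal.coe_le_coe, coe_nnnorm, hpow]; exact hc i j
        _ = m * c := by simp
    exact_mod_cast this
  · obtain ⟨z, hz, hzr⟩ := spectrum.exists_nnnorm_eq_spectralRadius B
    have hmax : IsGreatest ((fun z : ℂ => ‖z‖) '' spectrum ℂ B) ‖z‖ := by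
      refine ⟨⟨z, hz, rfl⟩, ?_⟩
      rintro _ ⟨y, hy, rfl⟩
      have h : (‖y‖₊ : ℝ≥0∞) ≤ spectralRadius ℂ B :=
        le_iSup₂ (f := fun (y : ℂ) (_ : y ∈ spectrum ℂ B) => (‖y‖₊ : ℝ≥0∞)) y hy
      rw [← hzr] at h
      exact_mod_cast h
    have hs : specRad A = (spectralRadius ℂ B).toReal := by
      rw [specRad, ← hB, hmax.csSup_eq, ← hzr]
      simp
    have hfin : spectralRadius ℂ B ≠ ∞ := by rw [← hzr]; simp
    rw [hs]
    refine ((ENNReal.tendsto_toReal hfin).comp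
      (spectrum.pow_norm_pow_one_div_tendsto_nhds_spectralRadius B)).congr fun k => ?_
    simp only [Function.comp_apply]
    rw [ENNReal.toReal_ofReal (by positivity)]

lemma tendsto_const_rpow_one_div {c : ℝ} (hc : 0 < c) :
    Tendsto (fun k : ℕ => c ^ (1 / k : ℝ)) atTop (𝓝 1) := by
  simpa using tendsto_const_nhds.rpow (tendsto_one_div_atTop_nhds_zero_nat (𝕜 := ℝ))
    (Or.inl hc.ne')

/-- Comparison of the exponential growth rates of two sequences bounding each other up to
constants, an exponent `q` and a geometric factor. -/
lemma growth_rate_comparison {s G : ℕ → ℝ} {c d w q ρ : ℝ} (hs : ∀ k, 0 ≤ s k)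
    (hG : ∀ k, 0 ≤ G k) (hc : 0 < c) (hd : 0 < d) (hw : 0 < w) (hq : 0 < q)
    (hsG : ∀ k, s k ≤ c * (G k / w ^ k) ^ (1 / q)) (hGs : ∀ k, G k ^ (1 / q) ≤ d * s k)
    (hρ : Tendsto (fun k : ℕ => G k ^ (1 / k : ℝ)) atTop (𝓝 ρ)) :
    w ^ (1 / q) * limsup (fun k : ℕ => s k ^ (1 / k : ℝ)) atTop ≤ ρ ^ (1 / q) ∧
      ρ ^ (1 / q) ≤ limsup (fun k : ℕ => s k ^ (1 / k : ℝ)) atTop := by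
  have hq' : 0 ≤ 1 / q := by positivity
  have hρ0 : 0 ≤ ρ := ge_of_tendsto' hρ fun k => Real.rpow_nonneg (hG k) _
  have hup : Tendsto (fun k : ℕ => c ^ (1 / k : ℝ) * (G k ^ (1 / k : ℝ) / w) ^ (1 / q)) atTop
      (𝓝 ((ρ / w) ^ (1 / q))) := by
    simpa using (tendsto_const_rpow_one_div hc).mul
      ((hρ.div_const w).rpow_const (Or.inr hq'))
  have hlo : Tendsto (fun k : ℕ => (G k ^ (1 / k : ℝ)) ^ (1 / q) / d ^ (1 / k : ℝ)) atTop
      (𝓝 (ρ ^ (1 / q))) := by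
    have h := (hρ.rpow_const (Or.inr hq')).div (tendsto_const_rpow_one_div hd) one_ne_zero
    rwa [div_one] at h
  have hsle : ∀ᶠ k : ℕ in atTop, s k ^ (1 / k : ℝ) ≤
      c ^ (1 / k : ℝ) * (G k ^ (1 / k : ℝ) / w) ^ (1 / q) := by
    filter_upwards [eventually_gt_atTop 0] with k hk
    have h := Real.rpow_le_rpow (hs k) (hsG k) (by positivity : (0 : ℝ) ≤ 1 / k)
    have hdiv : 0 ≤ G k / w ^ k := div_nonneg (hG k) (by positivity)
    have hwk : (w ^ k) ^ (1 / k : ℝ) = w := by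
      rw [one_div, Real.pow_rpow_inv_natCast hw.le hk.ne']
    rwa [Real.mul_rpow hc.le (Real.rpow_nonneg hdiv _), ← Real.rpow_mul hdiv, mul_comm (1 / q),
      Real.rpow_mul hdiv, Real.div_rpow (hG k) (by positivity), hwk] at h
  have hles : ∀ᶠ k : ℕ in atTop, (G k ^ (1 / k : ℝ)) ^ (1 / q) / d ^ (1 / k : ℝ) ≤
      s k ^ (1 / k : ℝ) := by
    refine Eventually.of_forall fun k => ?_
    have h := Real.rpow_le_rpow (Real.rpow_nonneg (hG k) _) (hGs k)
      (by positivity : (0 : ℝ) ≤ 1 / k)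
    rw [Real.mul_rpow hd.le (hs k), ← Real.rpow_mul (hG k), mul_comm (1 / q),
      Real.rpow_mul (hG k)] at h
    rw [div_le_iff₀ (by positivity)]
    linarith
  have hbdd : IsBoundedUnder (· ≤ ·) atTop (fun k : ℕ => s k ^ (1 / k : ℝ)) :=
    hup.isBoundedUnder_le.mono_le hsle
  have hcobdd : IsCoboundedUnder (· ≤ ·) atTop (fun k : ℕ => s k ^ (1 / k : ℝ)) :=
    isCoboundedUnder_le_of_le atTop (x := 0) fun k => Real.rpow_nonneg (hs k) _
  constructor
  · have h := limsup_le_limsup hsle hcobdd hup.isBoundedUnder_le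
    rw [hup.limsup_eq, Real.div_rpow hρ0 hw.le, le_div_iff₀ (by positivity)] at h
    linarith
  · have h := limsup_le_limsup hles hlo.isCoboundedUnder_le hbdd
    rwa [hlo.limsup_eq] at h

/-- The `2p`-th root of `ρ(E[A^{⊗2p}])` lies between `v ^ (1 / (2p))` times the joint spectral
radius and the joint spectral radius, for any positive lower bound `v` of the weights. -/
lemma specRad_sum_kronPow_bounds {n N : ℕ} (hn : 1 ≤ n) (Ms : Fin N → Mat n) {w : Fin N → ℝ}
    (hsum : ∑ i, w i = 1) {v : ℝ} (hv : 0 < v) (hvw : ∀ i, v ≤ w i) {p : ℕ} (hp : 0 < p) :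
    v ^ (1 / (2 * p : ℝ)) * jsr (Set.range Ms) ≤
        specRad (∑ i, w i • kronPow (Ms i) (2 * p)) ^ (1 / (2 * p : ℝ)) ∧
      specRad (∑ i, w i • kronPow (Ms i) (2 * p)) ^ (1 / (2 * p : ℝ)) ≤
        jsr (Set.range Ms) := by
  have hw : ∀ i, 0 < w i := fun i => hv.trans_le (hvw i)
  have hnpos : (0 : ℝ) < n := by exact_mod_cast hn
  have : Nonempty (Fin N) := by
    by_contra h
    rw [not_nonempty_iff] at h
    simp at hsum
  obtain ⟨G, hGle, hleG, hGt⟩ := exists_norm_pow_tendsto_specRad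
    (pow_pos hn (2 * p)) (∑ i, w i • kronPow (Ms i) (2 * p))
  have hG : ∀ k, 0 ≤ G k := fun k =>
    (abs_nonneg _).trans (hGle k ⟨0, pow_pos hn _⟩ ⟨0, pow_pos hn _⟩)
  set S : ℕ → Set ℝ := fun k => {x : ℝ | ∃ f : Fin k → Mat n,
    (∀ i, f i ∈ Set.range Ms) ∧ x = opNorm (prodRev f)} with hS
  have hSeq : ∀ k, S k = Set.range fun f : Fin k → Fin N => opNorm (prodRev fun t => Ms (f t)) := by
    intro k
    ext x
    constructor
    · rintro ⟨f, hf, rfl⟩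
      choose g hg using hf
      exact ⟨g, by simp [hg]⟩
    · rintro ⟨f, rfl⟩
      exact ⟨fun t => Ms (f t), fun t => ⟨_, rfl⟩, rfl⟩
  have hbdd : ∀ k, BddAbove (S k) := fun k => by
    rw [hSeq]; exact (Set.finite_range _).bddAbove
  have hle : ∀ k (f : Fin k → Fin N), opNorm (prodRev fun t => Ms (f t)) ≤ sSup (S k) :=
    fun k f => le_csSup (hbdd k) (by rw [hSeq]; exact ⟨f, rfl⟩)
  have hs : ∀ k, 0 ≤ sSup (S k) := fun k =>
    (norm_nonneg _).trans (hle k fun _ => Classical.arbitrary _)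
  have hq : (0 : ℝ) < 2 * p := by positivity
  refine growth_rate_comparison (s := fun k => sSup (S k)) (c := (n : ℝ) ^ 2) (d := n) hs hG
    (by positivity) hnpos hv hq (fun k => ?_) (fun k => ?_) hGt
  · rw [hSeq]
    refine csSup_le (Set.range_nonempty _) ?_
    rintro _ ⟨f, rfl⟩
    have hdiv : 0 ≤ G k / v ^ k := div_nonneg (hG k) (by positivity)
    refine opNorm_le_of_abs_apply_le _ (Real.rpow_nonneg hdiv _) fun i j => ?_
    obtain ⟨d, hd⟩ := exists_kronPow_apply_eq_pow n (2 * p)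
    have h := (le_abs_self _).trans (hGle k (d i) (d j))
    rw [sum_smul_kronPow_pow, Matrix.sum_apply] at h
    simp only [Matrix.smul_apply, hd, smul_eq_mul] at h
    have heven : ∀ x : ℝ, 0 ≤ x ^ (2 * p) := fun x => (even_two_mul p).pow_nonneg x
    have h1 := (Finset.single_le_sum (f := fun f : Fin k → Fin N =>
        (∏ t, w (f t)) * (prodRev fun t => Ms (f t)) i j ^ (2 * p))
      (fun f _ => mul_nonneg (Finset.prod_nonneg fun t _ => (hw _).le) (heven _))
      (Finset.mem_univ f)).trans h
    have h2 : v ^ k ≤ ∏ t, w (f t) := by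
      simpa using Finset.prod_le_prod (s := Finset.univ) (f := fun _ : Fin k => v)
        (fun _ _ => hv.le) (fun t _ => hvw (f t))
    have h3 := (mul_le_mul_of_nonneg_right h2 (heven _)).trans h1
    rw [one_div, Real.le_rpow_inv_iff_of_pos (abs_nonneg _) hdiv hq, le_div_iff₀ (by positivity)]
    have h4 : |(prodRev fun t => Ms (f t)) i j| ^ (2 * p : ℝ) =
        (prodRev fun t => Ms (f t)) i j ^ (2 * p) := by
      rw [← (even_two_mul p).pow_abs, ← Real.rpow_natCast]
      norm_num
    rw [h4]
    linarith
  · rw [one_div, Real.rpow_inv_le_iff_of_pos (hG k) (mul_nonneg hnpos.le (hs k)) hq]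
    have h := hleG k (sSup (S k) ^ (2 * p)) fun i j => by
      rw [sum_smul_kronPow_pow, Matrix.sum_apply]
      calc _ ≤ ∑ f : Fin k → Fin N, (∏ t, w (f t)) * sSup (S k) ^ (2 * p) := by
            refine (Finset.abs_sum_le_sum_abs _ _).trans (Finset.sum_le_sum fun f _ => ?_)
            have hprod : 0 ≤ ∏ t, w (f t) := Finset.prod_nonneg fun t _ => (hw _).le
            rw [Matrix.smul_apply, smul_eq_mul, abs_mul, abs_of_nonneg hprod]
            exact mul_le_mul_of_nonneg_left (abs_kronPow_apply_le _
              (fun i j => (abs_apply_le_opNorm _ i j).trans (hle k f)) _ i j) hprod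
        _ = sSup (S k) ^ (2 * p) := by
            rw [← Finset.sum_mul, ← Fintype.sum_pow, hsum, one_pow, one_mul]
    have h2 : ((n : ℝ) * sSup (S k)) ^ (2 * p : ℝ) = (n * sSup (S k)) ^ (2 * p) := by
      rw [← Real.rpow_natCast]
      norm_num
    rw [h2, mul_pow]
    exact_mod_cast h

/-- For a finitely supported probability measure `μ = Σ pᵢ δ_{Mᵢ}` (positive
weights summing to 1), `ρ̂({M₁,…,M_N}) = lim_{p→∞} ρ(E[A^{⊗2p}])^{1/(2p)}`. -/
theorem stmt2 (n N : ℕ) (hn : 1 ≤ n) (Ms : Fin N → Mat n) (w : Fin N → ℝ)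
    (hw : ∀ i, 0 < w i) (hsum : ∑ i, w i = 1)
    (μ : Measure (Mat n)) (hμ : μ = ∑ i, ENNReal.ofReal (w i) • Measure.dirac (Ms i)) :
    Tendsto (fun p : ℕ => specRad (kronExp μ (2 * p)) ^ (1 / (2 * p : ℝ))) atTop
      (𝓝 (jsr (Set.range Ms))) := by
  subst hμ
  obtain ⟨v, hv, hvw⟩ : ∃ v : ℝ, 0 < v ∧ ∀ i, v ≤ w i := by
    obtain hN | hN := isEmpty_or_nonempty (Fin N)
    · exact ⟨1, one_pos, fun i => hN.elim i⟩
    · obtain ⟨i, hi⟩ := Finite.exists_min w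
      exact ⟨w i, hw i, hi⟩
  simp only [kronExp_sum_dirac Ms w hw]
  have hlim : Tendsto (fun p : ℕ => v ^ (1 / (2 * p : ℝ)) * jsr (Set.range Ms)) atTop
      (𝓝 (jsr (Set.range Ms))) := by
    have h := (tendsto_const_rpow_one_div hv).comp
      (tendsto_id.const_mul_atTop' (two_pos : (0 : ℕ) < 2))
    simpa using h.mul_const (jsr (Set.range Ms))
  refine tendsto_of_tendsto_of_tendsto_of_le_of_le' hlim tendsto_const_nhds ?_ ?_ <;>
    filter_upwards [eventually_gt_atTop 0] with p hp
  · exact (specRad_sum_kronPow_bounds hn Ms hsum hv hvw hp).1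
  · exact (specRad_sum_kronPow_bounds hn Ms hsum hv hvw hp).2

end
end
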